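/- arXiv:2006.04799 — 2 statements merged into one kernel-verified Lean document; each statement's English description precedes it below -/
import Mathlib

section
/- The class {ℓ∞^n(ℂ)}_{n∈ℕ} satisfies the stable Ramsey property with modulus ϖ(δ) = δ: for all d, m ∈ ℕ, δ ≥ 0, and ε > 0 there exists n ∈ ℕ such that for every 1-Lipschitz map c from the set of linear δ-embeddings of ℓ∞^d(ℂ) into ℓ∞^n(ℂ) (with the operator-norm metric) to [0,1], there exists a linear isometric embedding γ : ℓ∞^m(ℂ) → ℓ∞^n(ℂ) such that |c(γ ∘ η₀) − c(γ ∘ η₁)| ≤ ε + δ for all linear δ-embeddings η₀, η₁ of ℓ∞^d(ℂ) into ℓ∞^m(ℂ). -/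
/-- `ℓ∞ⁿ(ℂ)`: the space `ℂⁿ` with the supremum norm. -/
abbrev LinfC (n : ℕ) : Type := PiLp ⊤ (fun _ : Fin n => ℂ)

/-- A linear `δ`-embedding between normed spaces: a contraction whose inverse (on its range)
has norm at most `1 + δ`.  `0`-embeddings are exactly the linear isometric embeddings. -/
def IsDeltaEmbedding {X Y : Type*} [NormedAddCommGroup X] [NormedSpace ℂ X]
    [NormedAddCommGroup Y] [NormedSpace ℂ Y] (δ : ℝ) (φ : X →L[ℂ] Y) : Prop :=
  ∀ x : X, ‖φ x‖ ≤ ‖x‖ ∧ ‖x‖ ≤ (1 + δ) * ‖φ x‖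

/-!
The Graham–Rothschild dual Ramsey theorem for rigid surjections follows by taking limits of a
colouring along products of ultrafilters on words. The ultrafilters are minimal idempotents, chosen
so that the factor introducing a new letter is absorbed by the preceding one under every
substitution that identifies this letter with an earlier one.

It is applied to a finite net of functionals on `X = ℓ∞ᵐ(ℂ)` listed in order of increasing norm.
Composing a functional with a contraction does not increase its norm, so a contractive section of
a coordinate projection `X × X → X` acts on the functionals of the net, up to a small error, as a
rigid surjection. Hence there is an isometric embedding `Γ` of `X × X` into some `ℓ∞ⁿ(ℂ)` such
that, for every contraction `η` into `X`, the value `c (Γ ∘ i ∘ η)` hardly depends on the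
section `i`.

Two `δ`-embeddings `η₀`, `η₁` into `X` are amalgamated by the Hahn–Banach theorem: there are
sections `i`, `j` with `‖i ∘ η₀ - j ∘ η₁‖ ≤ δ`. So the restriction of `Γ` to the diagonal of
`X × X` is the required embedding of `X`.
-/

namespace StableRamsey

open Filter

section CompactSemigroup

variable {S : Type*} [Semigroup S]

/-- An idempotent of the subsemigroup `A` that lies in a minimal left ideal of `A`; minimality of
the ideal `A * q` is expressed by saying that each of its elements generates `q` again. -/
def IsMinimalIdempotent (A : Set S) (q : S) : Prop :=
  q ∈ A ∧ q * q = q ∧ ∀ u ∈ A, ∃ v ∈ A, v * (u * q) = q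

theorem IsMinimalIdempotent.mul_eq_left {A : Set S} {p e : S} (hp : IsMinimalIdempotent A p)
    (he : e ∈ A) (hee : e * e = e) (hep : e * p = e) : p * e = p := by
  obtain ⟨v, -, hv⟩ := hp.2.2 e he
  rw [hep] at hv
  rw [← hv, mul_assoc, hee]

variable [TopologicalSpace S] [T2Space S] {A : Set S}

theorem exists_minimal_left_ideal (hcont : ∀ r : S, Continuous (· * r)) (hA : IsCompact A)
    (hmul : ∀ x ∈ A, ∀ y ∈ A, x * y ∈ A) {p : S} (hp : p ∈ A) :
    ∃ N ⊆ (· * p) '' A, IsCompact N ∧ N.Nonempty ∧ (∀ a ∈ A, ∀ x ∈ N, a * x ∈ N) ∧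
      ∀ x ∈ N, N ⊆ (· * x) '' A := by
  let 𝓛 : Set (Set S) := {N | IsCompact N ∧ N.Nonempty ∧ ∀ a ∈ A, ∀ x ∈ N, a * x ∈ N}
  have principal_mem : ∀ x, (· * x) '' A ∈ 𝓛 := by
    refine fun x => ⟨hA.image (hcont x), ⟨_, p, hp, rfl⟩, ?_⟩
    rintro a ha _ ⟨b, hb, rfl⟩
    exact ⟨a * b, hmul a ha b hb, mul_assoc a b x⟩
  obtain ⟨N, hNp, hN⟩ := zorn_superset_nonempty 𝓛 (fun C hC hchain hne =>
    ⟨⋂₀ C, ⟨hne.elim fun K hK => (hC hK).1.of_isClosed_subset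
        (isClosed_sInter fun K hK => (hC hK).1.isClosed) (Set.sInter_subset_of_mem hK),
      IsCompact.nonempty_sInter_of_directed_nonempty_isCompact_isClosed (hS := hne.to_subtype)
        (IsChain.directedOn hchain.symm) (fun K hK => (hC hK).2.1) (fun K hK => (hC hK).1)
        (fun K hK => (hC hK).1.isClosed),
      fun a ha x hx K hK => (hC hK).2.2 a ha x (hx K hK)⟩,
    fun K hK => Set.sInter_subset_of_mem hK⟩) _ (principal_mem p)
  obtain ⟨hNcompact, hNne, hNideal⟩ := hN.prop
  refine ⟨N, hNp, hNcompact, hNne, hNideal, fun x hx => hN.le_of_le (principal_mem x) ?_⟩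
  rintro _ ⟨a, ha, rfl⟩
  exact hNideal a ha x hx

theorem exists_isMinimalIdempotent (hcont : ∀ r : S, Continuous (· * r)) (hA : IsCompact A)
    (hmul : ∀ x ∈ A, ∀ y ∈ A, x * y ∈ A) {p : S} (hp : p ∈ A) (hpp : p * p = p) {R : Set S}
    (hR : IsClosed R) (hRmul : ∀ x ∈ R, ∀ y ∈ A, x * y ∈ R) (hRA : (R ∩ A).Nonempty) :
    ∃ q ∈ R, IsMinimalIdempotent A q ∧ q * p = q := by
  obtain ⟨N, hNp, hNcompact, ⟨x, hx⟩, hNideal, hNmin⟩ := exists_minimal_left_ideal hcont hA hmul hp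
  have hNA : N ⊆ A := hNp.trans (by rintro _ ⟨a, ha, rfl⟩; exact hmul a ha p hp)
  obtain ⟨r, hr, hrA⟩ := hRA
  obtain ⟨q, ⟨hqN, hqR⟩, hqq⟩ := exists_idempotent_in_compact_subsemigroup hcont (N ∩ R)
    ⟨r * x, hNideal r hrA x hx, hRmul r hr x (hNA hx)⟩ (hNcompact.inter_right hR)
    fun y hy z hz => ⟨hNideal y (hNA hy.1) z hz.1, hRmul y hy.2 z (hNA hz.1)⟩
  refine ⟨q, hqR, ⟨hNA hqN, hqq, fun u hu => hNmin _ (hNideal u hu q hqN) hqN⟩, ?_⟩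
  obtain ⟨a, -, rfl⟩ := hNp hqN
  simp only [mul_assoc, hpp]

end CompactSemigroup

/-- The monoid of ultrafilters on a monoid, with the convolution product of
`Ultrafilter.semigroup` and the principal ultrafilter at `1` as unit. -/
abbrev ultrafilterMonoid {M : Type*} [Monoid M] : Monoid (Ultrafilter M) :=
  { Ultrafilter.semigroup with
    one := pure 1
    one_mul := fun U => Ultrafilter.coe_inj.mp <| Filter.ext' fun P =>
      (Ultrafilter.eventually_mul (pure 1) U P).trans (by simp)
    mul_one := fun U => Ultrafilter.coe_inj.mp <| Filter.ext' fun P =>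
      (Ultrafilter.eventually_mul U (pure 1) P).trans (by simp) }

attribute [local instance] ultrafilterMonoid

section UltrafilterMonoid

variable {M : Type*} [Monoid M]

theorem eventually_mul_iff {U V : Ultrafilter M} {P : M → Prop} :
    (∀ᶠ w in ↑(U * V), P w) ↔ ∀ᶠ u in U, ∀ᶠ v in V, P (u * v) :=
  Iff.rfl

theorem ultrafilter_map_mul {M' : Type*} [Monoid M'] (f : M →* M') (U V : Ultrafilter M) :
    (U * V).map f = U.map f * V.map f :=
  Ultrafilter.coe_inj.mp <| Filter.ext' fun P =>
    show (∀ᶠ u in U, ∀ᶠ v in V, P (f (u * v))) ↔ ∀ᶠ u in U, ∀ᶠ v in V, P (f u * f v) by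
      simp only [map_mul]

theorem submonoid_mem_mul {N : Submonoid M} {U V : Ultrafilter M} (hU : (N : Set M) ∈ U)
    (hV : (N : Set M) ∈ V) : (N : Set M) ∈ U * V :=
  eventually_mul_iff.mpr <| mem_of_superset hU fun _ hu =>
    mem_of_superset hV fun _ hv => N.mul_mem hu hv

theorem mem_mul_of_forall_mul_mem {R : Set M} (hR : ∀ x ∈ R, ∀ y, x * y ∈ R)
    {U : Ultrafilter M} (hU : R ∈ U) (V : Ultrafilter M) : R ∈ U * V :=
  eventually_mul_iff.mpr <| mem_of_superset hU fun u hu => Eventually.of_forall (hR u hu)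

end UltrafilterMonoid

section InitSeg

variable {α β : Type*}

/-- The list `[X 0, X 1, …, X (n - 1)]`. -/
def initSeg (X : ℕ → α) (n : ℕ) : List α := (List.range n).map X

@[simp]
theorem length_initSeg (X : ℕ → α) (n : ℕ) : (initSeg X n).length = n := by
  simp [initSeg]

@[simp]
theorem getElem_initSeg (X : ℕ → α) {n i : ℕ} (hi : i < (initSeg X n).length) :
    (initSeg X n)[i] = X i := by
  simp [initSeg]

theorem getD_initSeg (X : ℕ → α) {n i : ℕ} (hi : i < n) (d : α) : (initSeg X n).getD i d = X i := by
  simp [hi]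

theorem initSeg_succ (X : ℕ → α) (n : ℕ) : initSeg X (n + 1) = initSeg X n ++ [X n] := by
  simp [initSeg, List.range_succ]

theorem map_initSeg (f : α → β) (X : ℕ → α) (n : ℕ) :
    (initSeg X n).map f = initSeg (f ∘ X) n :=
  List.map_map

theorem mem_initSeg_of_lt (X : ℕ → α) {n i : ℕ} (hi : i < n) : X i ∈ initSeg X n :=
  List.mem_map_of_mem (List.mem_range.mpr hi)

theorem initSeg_congr {X Y : ℕ → α} {n : ℕ} (h : ∀ i < n, X i = Y i) :
    initSeg X n = initSeg Y n :=
  List.map_congr_left fun i hi => h i (List.mem_range.mp hi)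

theorem exists_initSeg_eq_of_prefix [Inhabited α] {w : ℕ → List α}
    (hprefix : ∀ n, w n <+: w (n + 1)) (hlen : ∀ n, n ≤ (w n).length) :
    ∃ X : ℕ → α, ∀ n, initSeg X (w n).length = w n := by
  have prefix_of_le : ∀ {m n}, m ≤ n → w m <+: w n := fun {m n} hmn => by
    induction n, hmn using Nat.le_induction with
    | base => exact List.prefix_rfl
    | succ n _ ih => exact ih.trans (hprefix n)
  refine ⟨fun k => (w (k + 1)).getD k default, fun n => ?_⟩
  refine List.ext_getElem (length_initSeg _ _) fun k _ hk => ?_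
  rw [getElem_initSeg, List.getD_eq_getElem _ _ (hlen (k + 1))]
  rcases le_total n (k + 1) with h | h
  · exact ((prefix_of_le h).getElem hk).symm
  · exact (prefix_of_le h).getElem (hlen (k + 1))

end InitSeg

section Words

/-- The submonoid of words over `ℕ` all of whose letters are less than `i`. -/
def wordsBelow (i : ℕ) : Submonoid (FreeMonoid ℕ) where
  carrier := {w | ∀ a ∈ w, a < i}
  one_mem' := fun _ ha => absurd ha FreeMonoid.notMem_one
  mul_mem' := fun hv hw a ha => (FreeMonoid.mem_mul.mp ha).elim (hv a) (hw a)

/-- The set of words over `ℕ` whose first letter is `i`. -/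
def startsWith (i : ℕ) : Set (FreeMonoid ℕ) := {w | ∃ v, w = FreeMonoid.of i * v}

/-- The ultrafilters on words over `ℕ` that concentrate on the words with letters less than `i`. -/
def ultrafiltersBelow (i : ℕ) : Set (Ultrafilter (FreeMonoid ℕ)) :=
  {U | (wordsBelow i : Set (FreeMonoid ℕ)) ∈ U}

theorem of_mem_wordsBelow {a i : ℕ} (h : a < i) : FreeMonoid.of a ∈ wordsBelow i :=
  fun _ hb => FreeMonoid.mem_of.mp hb ▸ h

theorem wordsBelow_mono : Monotone wordsBelow :=
  fun _ _ h _ hw a ha => (hw a ha).trans_le h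

theorem mul_mem_startsWith {i : ℕ} : ∀ v ∈ startsWith i, ∀ w, v * w ∈ startsWith i := by
  rintro _ ⟨v, rfl⟩ w
  exact ⟨v * w, mul_assoc _ v w⟩

theorem map_mem_wordsBelow {i j : ℕ} {f : ℕ → ℕ} (hf : ∀ a < i, f a < j) {w : FreeMonoid ℕ}
    (hw : w ∈ wordsBelow i) : FreeMonoid.map f w ∈ wordsBelow j := by
  intro b hb
  obtain ⟨a, ha, rfl⟩ := FreeMonoid.mem_map.mp hb
  exact hf a (hw a ha)

theorem map_congr_of_mem_wordsBelow {i : ℕ} {f g : ℕ → ℕ} (hfg : ∀ a < i, f a = g a)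
    {w : FreeMonoid ℕ} (hw : w ∈ wordsBelow i) : FreeMonoid.map f w = FreeMonoid.map g w :=
  FreeMonoid.toList.injective <| List.map_congr_left fun a ha => hfg a (hw a ha)

theorem ultrafilter_map_mem_ultrafiltersBelow {i j : ℕ} {f : ℕ → ℕ} (hf : ∀ a < i, f a < j)
    {U : Ultrafilter (FreeMonoid ℕ)} (hU : U ∈ ultrafiltersBelow i) :
    U.map (FreeMonoid.map f) ∈ ultrafiltersBelow j :=
  mem_of_superset hU fun _ => map_mem_wordsBelow hf

theorem ultrafilter_map_congr {i : ℕ} {f g : ℕ → ℕ} (hfg : ∀ a < i, f a = g a)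
    {U : Ultrafilter (FreeMonoid ℕ)} (hU : U ∈ ultrafiltersBelow i) :
    U.map (FreeMonoid.map f) = U.map (FreeMonoid.map g) :=
  Ultrafilter.coe_inj.mp <| Filter.map_congr <|
    mem_of_superset hU fun _ => map_congr_of_mem_wordsBelow hfg

theorem exists_isMinimalIdempotent_ultrafiltersBelow {i : ℕ} {p : Ultrafilter (FreeMonoid ℕ)}
    (hp : p ∈ ultrafiltersBelow i) (hpp : p * p = p) {R : Set (FreeMonoid ℕ)}
    (hR : ∀ v ∈ R, ∀ w, v * w ∈ R) {w : FreeMonoid ℕ} (hwR : w ∈ R) (hw : w ∈ wordsBelow i) :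
    ∃ q : Ultrafilter (FreeMonoid ℕ), R ∈ q ∧ IsMinimalIdempotent (ultrafiltersBelow i) q ∧
      q * p = q :=
  exists_isMinimalIdempotent (A := ultrafiltersBelow i) Ultrafilter.continuous_mul_left
    (ultrafilter_isClosed_basic _).isCompact (fun _ hU _ hV => submonoid_mem_mul hU hV) hp hpp
    (ultrafilter_isClosed_basic R) (fun _ hU V _ => mem_mul_of_forall_mul_mem hR hU V)
    ⟨pure w, Ultrafilter.mem_pure.mpr hwR, Ultrafilter.mem_pure.mpr hw⟩

theorem IsMinimalIdempotent.exists_succ {i : ℕ} {p : Ultrafilter (FreeMonoid ℕ)}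
    (hp : IsMinimalIdempotent (ultrafiltersBelow i) p) :
    ∃ q, IsMinimalIdempotent (ultrafiltersBelow (i + 1)) q ∧ startsWith i ∈ q ∧
      ∀ t : ℕ → ℕ, (∃ a < i, t a = t i) →
        (p * q).map (FreeMonoid.map t) = p.map (FreeMonoid.map t) := by
  obtain ⟨q, hqR, hq, hqp⟩ := exists_isMinimalIdempotent_ultrafiltersBelow
    (mem_of_superset hp.1 (wordsBelow_mono i.le_succ)) hp.2.1 mul_mem_startsWith
    ⟨1, (mul_one _).symm⟩ (of_mem_wordsBelow i.lt_succ_self)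
  refine ⟨q, hq, hqR, ?_⟩
  rintro t ⟨a, ha, hta⟩
  -- Since `t` identifies `i` with `a`, it factors through the retraction `ρ` sending `i` to `a`;
  -- `ρ` fixes `p` and moves `q` to an idempotent below `i`, which `p` absorbs by minimality.
  set ρ : ℕ → ℕ := Function.update id i a with hρ
  have ρ_of_lt : ∀ b < i, ρ b = id b := fun b hb => Function.update_of_ne hb.ne _ _
  have ρ_lt : ∀ b < i + 1, ρ b < i := by
    intro b hb
    rcases Nat.lt_succ_iff_lt_or_eq.mp hb with hb | rfl
    · rwa [ρ_of_lt b hb]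
    · rwa [hρ, Function.update_self]
  have t_comp_ρ : t ∘ ρ = t := by
    rw [hρ, Function.comp_update, hta, Function.comp_id, Function.update_eq_self]
  have map_ρ_p : p.map (FreeMonoid.map ρ) = p := by
    rw [ultrafilter_map_congr ρ_of_lt hp.1, FreeMonoid.map_id]
    exact Ultrafilter.map_id p
  have map_t_map_ρ : ∀ U : Ultrafilter (FreeMonoid ℕ),
      (U.map (FreeMonoid.map ρ)).map (FreeMonoid.map t) = U.map (FreeMonoid.map t) := by
    intro U
    rw [Ultrafilter.map_map, ← MonoidHom.coe_comp, ← FreeMonoid.map_comp, t_comp_ρ]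
  have absorb : p * q.map (FreeMonoid.map ρ) = p := by
    apply hp.mul_eq_left (ultrafilter_map_mem_ultrafiltersBelow ρ_lt hq.1)
    · rw [← ultrafilter_map_mul, hq.2.1]
    · conv_lhs => rw [← map_ρ_p, ← ultrafilter_map_mul, hqp]
  calc (p * q).map (FreeMonoid.map t)
      = ((p * q).map (FreeMonoid.map ρ)).map (FreeMonoid.map t) := (map_t_map_ρ _).symm
    _ = (p * q.map (FreeMonoid.map ρ)).map (FreeMonoid.map t) := by
        rw [ultrafilter_map_mul, map_ρ_p]
    _ = p.map (FreeMonoid.map t) := by rw [absorb]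

/-- The product `x 0 * x 1 * ⋯ * x (n - 1)`. -/
def initProd {M : Type*} [Monoid M] (x : ℕ → M) (n : ℕ) : M := (initSeg x n).prod

theorem initProd_succ {M : Type*} [Monoid M] (x : ℕ → M) (n : ℕ) :
    initProd x (n + 1) = initProd x n * x n :=
  List.prod_range_succ x n

theorem exists_absorbing_ultrafilters : ∃ p : ℕ → Ultrafilter (FreeMonoid ℕ),
    (∀ i, p i ∈ ultrafiltersBelow (i + 1)) ∧ (∀ i, startsWith i ∈ p i) ∧
    ∀ n, ∀ t : ℕ → ℕ, (∃ a < n, t a = t n) →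
      (initProd p (n + 1)).map (FreeMonoid.map t) = (initProd p n).map (FreeMonoid.map t) := by
  obtain ⟨p₀, -, hp₀, -⟩ := exists_isMinimalIdempotent_ultrafiltersBelow (i := 0) (p := 1)
    (wordsBelow 0).one_mem (one_mul 1) (fun v _ w => Set.mem_univ (v * w)) (Set.mem_univ 1)
    (wordsBelow 0).one_mem
  choose next hnext hstart habsorb using fun (i : ℕ)
    (p : {p // IsMinimalIdempotent (ultrafiltersBelow i) p}) => p.2.exists_succ
  let r : ∀ i, {p // IsMinimalIdempotent (ultrafiltersBelow i) p} := fun i =>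
    Nat.rec ⟨p₀, hp₀⟩ (fun i p => ⟨next i p, hnext i p⟩) i
  refine ⟨fun i => r (i + 1), fun i => (r (i + 1)).2.1, fun i => hstart i (r i), fun n t ht => ?_⟩
  obtain _ | n := n
  · simp at ht
  · rw [initProd_succ, initProd_succ, mul_assoc,
      ultrafilter_map_mul _ (initProd _ n), ultrafilter_map_mul _ (initProd _ n)]
    exact congrArg _ (habsorb (n + 1) (r (n + 1)) t ht)

theorem ultrafilter_map_initProd_eq {p : ℕ → Ultrafilter (FreeMonoid ℕ)} {t : ℕ → ℕ}
    (hp : ∀ n, (∃ a < n, t a = t n) →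
      (initProd p (n + 1)).map (FreeMonoid.map t) = (initProd p n).map (FreeMonoid.map t))
    {q n : ℕ} (hqn : q ≤ n) (ht : ∀ i < n, ∃ j < q, t j = t i) :
    (initProd p n).map (FreeMonoid.map t) = (initProd p q).map (FreeMonoid.map t) := by
  induction n, hqn using Nat.le_induction with
  | base => rfl
  | succ n hqn ih =>
    obtain ⟨j, hj, hjn⟩ := ht n n.lt_succ_self
    rw [hp n ⟨j, hj.trans_le hqn, hjn⟩, ih fun i hi => ht i (hi.trans n.lt_succ_self)]

end Words

theorem exists_eventually_eq {α κ : Type*} [Finite κ] (U : Ultrafilter α) (f : α → κ) :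
    ∃ k, ∀ᶠ a in U, f a = k := by
  obtain ⟨k, hk⟩ := Ultrafilter.eq_pure_of_finite (U.map f)
  have hmem : {k} ∈ U.map f := hk ▸ Ultrafilter.mem_pure.mpr rfl
  exact ⟨k, hmem⟩

theorem initProd_congr {M : Type*} [Monoid M] {x y : ℕ → M} {n : ℕ} (h : ∀ i < n, x i = y i) :
    initProd x n = initProd y n :=
  congrArg List.prod (initSeg_congr h)

theorem initProd_mem_ultrafiltersBelow {p : ℕ → Ultrafilter (FreeMonoid ℕ)}
    (hp : ∀ i, p i ∈ ultrafiltersBelow (i + 1)) (n : ℕ) : initProd p n ∈ ultrafiltersBelow n := by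
  induction n with
  | zero => exact (wordsBelow 0).one_mem
  | succ n ih =>
    rw [initProd_succ]
    exact submonoid_mem_mul (mem_of_superset ih (wordsBelow_mono n.le_succ)) (hp n)

theorem exists_forall_initProd {M : Type*} [Monoid M] {p : ℕ → Ultrafilter M} {B : ℕ → Set M}
    (hB : ∀ i, B i ∈ p i) {Q : ℕ → M → Prop} {N : ℕ}
    (hQ : ∀ n ≤ N, ∀ᶠ w in ↑(initProd p n), Q n w) :
    ∃ x : ℕ → M, (∀ i, x i ∈ B i) ∧ ∀ n ≤ N, Q n (initProd x n) := by
  induction N generalizing Q with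
  | zero =>
    choose x hx using fun i => Ultrafilter.nonempty_of_mem (hB i)
    exact ⟨x, hx, fun n hn => by obtain rfl := Nat.le_zero.mp hn; exact hQ 0 le_rfl⟩
  | succ N ih =>
    obtain ⟨x, hxB, hx⟩ := ih (Q := fun n w => Q n w ∧ (n = N → ∀ᶠ a in p N, Q (N + 1) (w * a)))
      (fun n hn => (hQ n (hn.trans N.le_succ)).and <| by
        rcases eq_or_ne n N with rfl | hne
        · have hQ_succ := hQ (n + 1) le_rfl
          rw [initProd_succ] at hQ_succ
          exact (eventually_mul_iff.mp hQ_succ).mono fun _ h _ => h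
        · exact Eventually.of_forall fun _ h => absurd h hne)
    obtain ⟨a, ha, haB⟩ := (((hx N le_rfl).2 rfl).and (hB N)).exists
    have update_of_lt : ∀ i < N, Function.update x N a i = x i :=
      fun i hi => Function.update_of_ne hi.ne _ _
    refine ⟨Function.update x N a, fun i => ?_, fun n hn => ?_⟩
    · rcases eq_or_ne i N with rfl | hne
      · rwa [Function.update_self]
      · rw [Function.update_of_ne hne]
        exact hxB i
    · rcases Nat.le_succ_iff.mp hn with hn | rfl
      · rw [initProd_congr fun i hi => update_of_lt i (hi.trans_le hn)]
        exact (hx n hn).1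
      · rwa [initProd_succ, Function.update_self, initProd_congr update_of_lt]

section RigidSurjection

variable {α β γ : Type*}

/-- The value `b` first occurs in `τ` at `a`, and only smaller values occur before. -/
def FirstOccursAt [LT α] [LT β] (τ : α → β) (b : β) (a : α) : Prop :=
  τ a = b ∧ ∀ a' < a, τ a' < b

/-- A rigid surjection between ordered sets: every value occurs, and the first occurrences of the
values come in increasing order. -/
def RigidSurj [LT α] [LT β] (τ : α → β) : Prop := ∀ b, ∃ a, FirstOccursAt τ b a

theorem FirstOccursAt.comp [LT α] [LT β] [LT γ] {τ : α → β} {σ : γ → α} {b : β} {a : α} {c : γ}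
    (hτ : FirstOccursAt τ b a) (hσ : FirstOccursAt σ a c) : FirstOccursAt (τ ∘ σ) b c :=
  ⟨(congrArg τ hσ.1).trans hτ.1, fun c' hc' => hτ.2 _ (hσ.2 c' hc')⟩

theorem RigidSurj.comp [LT α] [LT β] [LT γ] {τ : α → β} {σ : γ → α} (hτ : RigidSurj τ)
    (hσ : RigidSurj σ) : RigidSurj (τ ∘ σ) := fun b =>
  let ⟨a, ha⟩ := hτ b
  let ⟨c, hc⟩ := hσ a
  ⟨c, ha.comp hc⟩

theorem rigidSurj_orderIso [Preorder α] [Preorder β] (e : α ≃o β) : RigidSurj e := fun b =>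
  ⟨e.symm b, e.apply_symm_apply b, fun _ ha' => e.lt_symm_apply.mp ha'⟩

theorem RigidSurj.surjective [LT α] [LT β] {τ : α → β} (hτ : RigidSurj τ) :
    Function.Surjective τ := fun b => (hτ b).imp fun _ ha => ha.1

theorem FirstOccursAt.lt_of_lt [LinearOrder α] [Preorder β] {τ : α → β} {b b' : β} {a a' : α}
    (h : FirstOccursAt τ b a) (h' : FirstOccursAt τ b' a') (hb : b < b') : a < a' := by
  by_contra! hle
  rcases hle.lt_or_eq with hlt | rfl
  · exact hb.not_gt (h'.1 ▸ h.2 a' hlt)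
  · exact hb.ne (h.1.symm.trans h'.1)

theorem strictMono_of_firstOccursAt {X c : ℕ → ℕ} (h : ∀ n, FirstOccursAt X n (c n)) :
    StrictMono c := fun m n => (h m).lt_of_lt (h n)

theorem rigidSurj_of_le_monotone [LinearOrder γ] [WellFoundedLT γ] [PartialOrder α]
    {τ f : γ → α} (hf : Monotone f) (hle : ∀ c, τ c ≤ f c) (hτ : ∀ a, ∃ c, f c = a ∧ τ c = a) :
    RigidSurj τ := by
  intro a
  obtain ⟨c, hfc, hτc⟩ := hτ a
  obtain ⟨c₀, hc₀, hmin⟩ := wellFounded_lt.has_min {c | τ c = a} ⟨c, hτc⟩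
  refine ⟨c₀, hc₀, fun c' hc' => lt_of_le_of_ne ?_ fun h => hmin c' h hc'⟩
  calc τ c' ≤ f c' := hle c'
    _ ≤ f c := hf (hc'.le.trans (not_lt.mp (hmin c hτc)))
    _ = a := hfc

/-- The restriction of `τ` to `{0, …, n - 1}` is a rigid surjection onto `{0, …, s - 1}`. -/
def RigidSurjBelow (n s : ℕ) (τ : ℕ → ℕ) : Prop :=
  (∀ i < n, τ i < s) ∧ ∀ b < s, ∃ q < n, FirstOccursAt τ b q

theorem RigidSurjBelow.of_firstOccursAt {n s q : ℕ} {τ : ℕ → ℕ} (hτ : RigidSurjBelow n (s + 1) τ)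
    (hq : FirstOccursAt τ s q) : RigidSurjBelow q s τ :=
  ⟨hq.2, fun b hb => by
    obtain ⟨r, -, hr⟩ := hτ.2 b (hb.trans s.lt_succ_self)
    exact ⟨r, hr.lt_of_lt hq hb, hr⟩⟩

end RigidSurjection

theorem exists_initSeg_eq_initProd {x : ℕ → FreeMonoid ℕ}
    (hx : ∀ i, x i ∈ (wordsBelow (i + 1) : Set (FreeMonoid ℕ)) ∩ startsWith i) :
    ∃ X c : ℕ → ℕ, (∀ n, FirstOccursAt X n (c n)) ∧
      ∀ n, initSeg X (c n) = (initProd x n).toList := by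
  choose hbelow v hv using hx
  have toList_succ : ∀ n, (initProd x (n + 1)).toList =
      (initProd x n).toList ++ n :: (v n).toList := fun n => by
    rw [initProd_succ, hv n]
    rfl
  have below : ∀ n, initProd x n ∈ wordsBelow n := fun n => by
    induction n with
    | zero => exact (wordsBelow 0).one_mem
    | succ n ih =>
      rw [initProd_succ]
      exact (wordsBelow _).mul_mem (wordsBelow_mono n.le_succ ih) (hbelow n)
  have le_length : ∀ n, n ≤ (initProd x n).toList.length := fun n => by
    induction n with
    | zero => exact Nat.zero_le _
    | succ n ih =>
      rw [toList_succ, List.length_append, List.length_cons]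
      omega
  obtain ⟨X, hX⟩ := exists_initSeg_eq_of_prefix
    (fun n => ⟨_, (toList_succ n).symm⟩) le_length
  refine ⟨X, fun n => (initProd x n).toList.length, fun n => ⟨?_, fun a ha => ?_⟩, hX⟩
  · calc X (initProd x n).toList.length
        = (initSeg X (initProd x (n + 1)).toList.length).getD (initProd x n).toList.length 0 :=
          (getD_initSeg X (by simp [toList_succ]) 0).symm
      _ = n := by rw [hX, toList_succ]; simp
  · have hmem := mem_initSeg_of_lt X ha
    rw [hX] at hmem
    exact below n (X a) hmem

theorem eventually_forall_of_bounded {α : Type*} {l : Filter α} {n s : ℕ}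
    {P : (ℕ → ℕ) → α → Prop}
    (hcongr : ∀ᶠ w in l, ∀ t t' : ℕ → ℕ, (∀ i < n, t i = t' i) → P t w → P t' w)
    (hP : ∀ t : ℕ → ℕ, (∀ i < n, t i < s) → ∀ᶠ w in l, P t w) :
    ∀ᶠ w in l, ∀ t : ℕ → ℕ, (∀ i < n, t i < s) → P t w := by
  let extend : (Fin n → Fin s) → ℕ → ℕ := fun f i => if h : i < n then f ⟨i, h⟩ else 0
  have extend_lt : ∀ f, ∀ i < n, extend f i < s := fun f i hi => by simp [extend, hi]
  filter_upwards [hcongr, eventually_all.mpr fun f => hP (extend f) (extend_lt f)] with w hw hall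
  intro t ht
  exact hw (extend fun i => ⟨t i, ht i i.2⟩) t (fun i hi => by simp [extend, hi])
    (hall fun i => ⟨t i, ht i i.2⟩)

theorem exists_fusion {κ : Type*} [Finite κ] (ψ : List ℕ → κ) : ∃ ψ' : List ℕ → κ, ∀ s N : ℕ,
    ∃ X c : ℕ → ℕ, (∀ n, FirstOccursAt X n (c n)) ∧
      ∀ n ≤ N, ∀ t : ℕ → ℕ, (∀ i < n, t i < s) → ∀ q ≤ n, (∀ i < n, ∃ j < q, t j = t i) →
        ψ (initSeg (t ∘ X) (c n)) = ψ' (initSeg t q) := by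
  obtain ⟨p, hbelow, hstart, habsorb⟩ := exists_absorbing_ultrafilters
  have hP := initProd_mem_ultrafiltersBelow hbelow
  choose ψ' hψ' using fun v : List ℕ => exists_eventually_eq (initProd p v.length)
    fun w => ψ (FreeMonoid.map (fun i => v.getD i 0) w).toList
  have eventually_eq : ∀ (n : ℕ) (t : ℕ → ℕ) (q : ℕ), q ≤ n → (∀ i < n, ∃ j < q, t j = t i) →
      ∀ᶠ w in ↑(initProd p n), ψ (FreeMonoid.map t w).toList = ψ' (initSeg t q) := by
    intro n t q hqn hq
    have hlim := hψ' (initSeg t q)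
    rw [length_initSeg] at hlim
    have hmap : ∀ᶠ w in ↑((initProd p q).map (FreeMonoid.map t)),
        ψ (FreeMonoid.toList w) = ψ' (initSeg t q) := by
      refine (hlim.and (hP q)).mono fun w ⟨hw, hwq⟩ => ?_
      rwa [map_congr_of_mem_wordsBelow (fun i hi => getD_initSeg t hi 0) hwq] at hw
    rwa [← ultrafilter_map_initProd_eq (fun n => habsorb n t) hqn hq] at hmap
  refine ⟨ψ', fun s N => ?_⟩
  obtain ⟨x, hxB, hx⟩ := exists_forall_initProd (N := N)
    (fun i => inter_mem (hbelow i) (hstart i)) fun n _ =>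
    eventually_forall_of_bounded (n := n) (s := s)
      (P := fun t w => ∀ q ≤ n, (∀ i < n, ∃ j < q, t j = t i) →
        ψ (FreeMonoid.map t w).toList = ψ' (initSeg t q))
      (mem_of_superset (hP n) fun w hw t t' htt' h q hqn hq => by
        rw [← map_congr_of_mem_wordsBelow htt' hw,
          ← initSeg_congr fun i hi => htt' i (hi.trans_le hqn)]
        refine h q hqn fun i hi => ?_
        obtain ⟨j, hj, hji⟩ := hq i hi
        exact ⟨j, hj, by rw [htt' j (hj.trans_le hqn), htt' i hi, hji]⟩)
      fun t _ => (eventually_all_finite (Set.finite_Iic n)).mpr fun q hqn =>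
        eventually_imp_distrib_left.mpr (eventually_eq n t q hqn)
  obtain ⟨X, c, hX, hXc⟩ := exists_initSeg_eq_initProd hxB
  refine ⟨X, c, hX, fun n hn t ht q hqn hq => ?_⟩
  rw [← hx n hn t ht q hqn hq, ← map_initSeg, hXc, FreeMonoid.toList_map]

theorem dual_ramsey_seq {κ : Type*} [Finite κ] (s : ℕ) (ψ : List ℕ → κ) (L : ℕ) :
    ∃ X c : ℕ → ℕ, (∀ n, FirstOccursAt X n (c n)) ∧
      ∃ k, ∀ n ≤ L, ∀ τ, RigidSurjBelow n s τ → ψ (initSeg (τ ∘ X) (c n)) = k := by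
  induction s generalizing ψ L with
  | zero =>
    refine ⟨id, id, fun n => ⟨rfl, fun _ => id⟩, ψ [], fun n _ τ hτ => ?_⟩
    have hn : n = 0 := Nat.eq_zero_of_not_pos fun h => absurd (hτ.1 0 h) (Nat.not_lt_zero _)
    rw [hn]
    rfl
  | succ s ih =>
    -- Once its largest value `s` has occurred, `τ` only repeats values, so its limit colour is
    -- determined by the segment of `τ` that ends with the first `s`.
    obtain ⟨ψ', hψ'⟩ := exists_fusion ψ
    obtain ⟨Y, d, hY, k, hk⟩ := ih (fun v => ψ' (v ++ [s])) L
    obtain ⟨X, c, hX, hXc⟩ := hψ' (s + 1) (d L)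
    have d_mono := strictMono_of_firstOccursAt hY
    refine ⟨Y ∘ X, c ∘ d, fun n => (hY n).comp (hX _), k, fun n hn τ hτ => ?_⟩
    obtain ⟨q, hqn, hq⟩ := hτ.2 s s.lt_succ_self
    have repeats : ∀ i < d n, ∃ j < d q + 1, (τ ∘ Y) j = (τ ∘ Y) i := fun i hi => by
      obtain ⟨r, -, hr⟩ := hτ.2 _ (hτ.1 _ ((hY n).2 i hi))
      refine ⟨d r, Nat.lt_succ_of_le (d_mono.monotone ?_), ?_⟩
      · rcases (Nat.lt_succ_iff.mp (hτ.1 _ ((hY n).2 i hi))).lt_or_eq with hlt | heq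
        · exact (hr.lt_of_lt hq hlt).le
        · by_contra! hqr
          exact (heq ▸ hr.2 q hqr).ne hq.1
      · rw [Function.comp_apply, (hY r).1, hr.1, Function.comp_apply]
    calc ψ (initSeg (τ ∘ Y ∘ X) (c (d n)))
        = ψ' (initSeg (τ ∘ Y) (d q + 1)) :=
          hXc (d n) (d_mono.monotone hn) (τ ∘ Y) (fun i hi => hτ.1 _ ((hY n).2 i hi)) (d q + 1)
            (d_mono hqn) repeats
      _ = ψ' (initSeg (τ ∘ Y) (d q) ++ [s]) := by
          rw [initSeg_succ, Function.comp_apply, (hY q).1, hq.1]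
      _ = k := hk q (hqn.le.trans hn) τ (hτ.of_firstOccursAt hq)

theorem RigidSurj.map_zero {L s : ℕ} [NeZero L] [NeZero s] {τ : Fin L → Fin s}
    (hτ : RigidSurj τ) : τ 0 = 0 := by
  obtain ⟨a, ha, hlt⟩ := hτ 0
  rcases (Fin.zero_le a).lt_or_eq with h | rfl
  · exact absurd (hlt 0 h) (Fin.not_lt_zero _)
  · exact ha

theorem RigidSurj.rigidSurjBelow {L s : ℕ} [NeZero L] {τ : Fin L → Fin s} (hτ : RigidSurj τ) :
    RigidSurjBelow L s fun i => τ (Fin.ofNat L i) := by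
  have ofNat_of_lt : ∀ i (hi : i < L), Fin.ofNat L i = ⟨i, hi⟩ := fun i hi => by
    rw [Fin.ofNat_eq_cast, Fin.natCast_eq_mk hi]
  refine ⟨fun i _ => (τ _).2, fun b hb => ?_⟩
  obtain ⟨a, ha, hlt⟩ := hτ ⟨b, hb⟩
  refine ⟨a, a.2, by simp only [ofNat_of_lt a a.2, ha], fun i hi => ?_⟩
  simp only [ofNat_of_lt i (hi.trans a.2)]
  exact hlt ⟨i, hi.trans a.2⟩ hi

theorem dual_ramsey_fin {κ : Type*} [Finite κ] (L s : ℕ) [NeZero L] [NeZero s] :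
    ∃ N : ℕ, ∀ ψ : (Fin N → Fin s) → κ, ∃ σ : Fin N → Fin L, RigidSurj σ ∧
      ∃ k, ∀ τ : Fin L → Fin s, RigidSurj τ → ψ (τ ∘ σ) = k := by
  -- The limit, along a nonprincipal ultrafilter, of a bad colouring for each `N` would be a
  -- colouring of finite words contradicting `dual_ramsey_seq`.
  by_contra! hbad
  choose ψ hψ using hbad
  let pad : (N : ℕ) → List ℕ → Fin N → Fin s := fun N v i => Fin.ofNat s (v.getD i 0)
  choose Ψ hΨ using fun v => exists_eventually_eq (hyperfilter ℕ) fun N => ψ N (pad N v)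
  obtain ⟨X, c, hX, k, hk⟩ := dual_ramsey_seq s Ψ L
  let ext : (Fin L → Fin s) → ℕ → ℕ := fun τ i => τ (Fin.ofNat L i)
  have hlimit : ∀ᶠ N in (hyperfilter ℕ : Filter ℕ), c L ≤ N ∧ ∀ τ : Fin L → Fin s,
      ψ N (pad N (initSeg (ext τ ∘ X) (c L))) = Ψ (initSeg (ext τ ∘ X) (c L)) :=
    ((eventually_ge_atTop _).filter_mono Nat.hyperfilter_le_atTop).and
      (eventually_all.mpr fun τ => hΨ _)
  obtain ⟨N, hN, hψΨ⟩ := hlimit.exists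
  let σ : Fin N → Fin L := fun i => if (i : ℕ) < c L then Fin.ofNat L (X i) else 0
  have σ_of_lt : ∀ i : Fin N, (i : ℕ) < c L → (σ i : ℕ) = X i := fun i hi => by
    simp [σ, hi, Nat.mod_eq_of_lt ((hX L).2 i hi)]
  have σ_rigid : RigidSurj σ := fun b => by
    have hb := strictMono_of_firstOccursAt hX b.2
    refine ⟨⟨c b, hb.trans_le hN⟩, Fin.ext ((σ_of_lt _ hb).trans (hX b).1), fun i hi => ?_⟩
    rw [Fin.lt_def, σ_of_lt i (lt_trans hi hb)]
    exact (hX b).2 i hi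
  obtain ⟨τ, hτ, hne⟩ := hψ N σ σ_rigid k
  have comp_eq_pad : τ ∘ σ = pad N (initSeg (ext τ ∘ X) (c L)) := by
    funext i
    by_cases hi : (i : ℕ) < c L
    · simp [σ, pad, hi, ext]
    · simp [σ, pad, hi, hτ.map_zero]
  exact hne <| by rw [comp_eq_pad, hψΨ, hk L le_rfl _ hτ.rigidSurjBelow]

theorem dual_ramsey {α β κ : Type*} [LinearOrder α] [Finite α] [Nonempty α] [LinearOrder β]
    [Finite β] [Nonempty β] [Finite κ] :
    ∃ N : ℕ, ∀ ψ : (Fin N → β) → κ, ∃ σ : Fin N → α, RigidSurj σ ∧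
      ∃ k, ∀ τ : α → β, RigidSurj τ → ψ (τ ∘ σ) = k := by
  have := Fintype.ofFinite α
  have := Fintype.ofFinite β
  have : NeZero (Fintype.card α) := ⟨Fintype.card_ne_zero⟩
  have : NeZero (Fintype.card β) := ⟨Fintype.card_ne_zero⟩
  let eα := Fintype.orderIsoFinOfCardEq α rfl
  let eβ := Fintype.orderIsoFinOfCardEq β rfl
  obtain ⟨N, hN⟩ := dual_ramsey_fin (κ := κ) (Fintype.card α) (Fintype.card β)
  refine ⟨N, fun ψ => ?_⟩
  obtain ⟨σ, hσ, k, hk⟩ := hN fun w => ψ (eβ ∘ w)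
  refine ⟨eα ∘ σ, (rigidSurj_orderIso eα).comp hσ, k, fun τ hτ => ?_⟩
  rw [← hk (eβ.symm ∘ τ ∘ eα)
    ((rigidSurj_orderIso eβ.symm).comp (hτ.comp (rigidSurj_orderIso eα)))]
  congr 1
  funext i
  simp

theorem exists_monotone_enumeration {V γ : Type*} [LinearOrder γ] {G : Set V} (hG : G.Finite)
    (f : V → γ) : ∃ (s : ℕ) (D : Fin s → V), Set.range D = G ∧ Monotone (f ∘ D) := by
  have := hG.fintype
  let enum : Fin (Fintype.card G) → V := fun i => (Fintype.equivFin G).symm i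
  refine ⟨_, enum ∘ Tuple.sort (f ∘ enum), ?_, Tuple.monotone_sort (f ∘ enum)⟩
  rw [Set.range_comp, (Equiv.surjective _).range_eq, Set.image_univ]
  exact ((Fintype.equivFin G).symm.surjective.range_comp _).trans Subtype.range_coe

section Net

variable {V : Type*} [NormedAddCommGroup V] [NormedSpace ℝ V]

theorem exists_mem_net_norm_lt {ε : ℝ} (hε : 0 ≤ ε) {T : Set V}
    (hT : Metric.closedBall 0 1 ⊆ ⋃ g ∈ T, Metric.ball g (ε / 2)) {v : V} (hεv : ε < ‖v‖)
    (hv : ‖v‖ ≤ 1) : ∃ g ∈ T, ‖g‖ < ‖v‖ ∧ ‖v - g‖ ≤ ε := by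
  have hv0 : 0 < ‖v‖ := hε.trans_lt hεv
  have hratio : ε / 2 / ‖v‖ ≤ 1 := (div_le_one hv0).mpr (by linarith)
  -- A net point close to `v` shortened by `ε / 2` has norm strictly less than `v`.
  let v' := (1 - ε / 2 / ‖v‖) • v
  have norm_v' : ‖v'‖ = ‖v‖ - ε / 2 := by
    rw [norm_smul, Real.norm_of_nonneg (sub_nonneg.mpr hratio), sub_mul, one_mul,
      div_mul_cancel₀ _ hv0.ne']
  have norm_sub_v' : ‖v - v'‖ = ε / 2 := by
    rw [show v - v' = (ε / 2 / ‖v‖) • v by module, norm_smul,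
      Real.norm_of_nonneg (by positivity), div_mul_cancel₀ _ hv0.ne']
  have hv' : v' ∈ Metric.closedBall (0 : V) 1 := mem_closedBall_zero_iff.mpr (by linarith)
  obtain ⟨g, hgT, hg⟩ := Set.mem_iUnion₂.mp (hT hv')
  rw [mem_ball_iff_norm] at hg
  refine ⟨g, hgT, ?_, ?_⟩
  · linarith [norm_le_norm_add_norm_sub v' g]
  · linarith [norm_sub_le_norm_sub_add_norm_sub v v' g]

theorem exists_norm_sorted_net [ProperSpace V] {ε : ℝ} (hε : 0 < ε) {F : Set V} (hF : F.Finite)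
    (hF_ball : F ⊆ Metric.closedBall 0 1) :
    ∃ (s : ℕ) (D : Fin s → V), 0 ∈ Set.range D ∧ F ⊆ Set.range D ∧ (∀ a, ‖D a‖ ≤ 1) ∧
      ∀ a v, ‖v‖ ≤ ‖D a‖ → ∃ b ≤ a, ‖v - D b‖ ≤ ε := by
  obtain ⟨T, hT_ball, hT, hcover⟩ :=
    (isCompact_closedBall (0 : V) 1).finite_cover_balls (half_pos hε)
  obtain ⟨s, D, hrange, hmono⟩ := exists_monotone_enumeration ((hT.union hF).insert 0) norm
  have norm_D_le : ∀ a, ‖D a‖ ≤ 1 := fun a => by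
    rcases hrange.subset (Set.mem_range_self a) with h | h | h
    · rw [h, norm_zero]
      exact zero_le_one
    · exact mem_closedBall_zero_iff.mp (hT_ball h)
    · exact mem_closedBall_zero_iff.mp (hF_ball h)
  have zero_mem : 0 ∈ Set.range D := hrange.superset (Set.mem_insert _ _)
  refine ⟨s, D, zero_mem, fun v hv => hrange.superset (Set.mem_insert_of_mem _ (Or.inr hv)),
    norm_D_le, fun a v hva => ?_⟩
  rcases (norm_nonneg (D a)).eq_or_lt with ha | ha
  · rw [← ha, norm_le_zero_iff] at hva
    exact ⟨a, le_rfl, by rw [hva, norm_eq_zero.mp ha.symm, sub_zero, norm_zero]; exact hε.le⟩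
  suffices ∃ g ∈ Set.range D, ‖g‖ < ‖D a‖ ∧ ‖v - g‖ ≤ ε by
    obtain ⟨_, ⟨b, rfl⟩, hba, hvb⟩ := this
    exact ⟨b, (hmono.reflect_lt hba).le, hvb⟩
  rcases le_or_gt ‖v‖ ε with hv | hv
  · exact ⟨0, zero_mem, by rwa [norm_zero], by rwa [sub_zero]⟩
  · obtain ⟨g, hg, hgv, hvg⟩ := exists_mem_net_norm_lt hε.le hcover hv (hva.trans (norm_D_le a))
    exact ⟨g, hrange.superset (Set.mem_insert_of_mem _ (Or.inl hg)), hgv.trans_le hva, hvg⟩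

end Net

section Rows

variable {E X : Type*} [NormedAddCommGroup E] [NormedSpace ℂ E] [NormedAddCommGroup X]
  [NormedSpace ℂ X] {n : ℕ}

/-- The operator into `ℓ∞ⁿ(ℂ)` whose coordinate functionals are `r 0, …, r (n - 1)`. -/
noncomputable def ofRows (r : Fin n → X →L[ℂ] ℂ) : X →L[ℂ] LinfC n :=
  (PiLp.continuousLinearEquiv ⊤ ℂ fun _ : Fin n => ℂ).symm.toContinuousLinearMap.comp
    (ContinuousLinearMap.pi r)

theorem ofRows_apply (r : Fin n → X →L[ℂ] ℂ) (x : X) (i : Fin n) : ofRows r x i = r i x := rfl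

theorem ofRows_comp (r : Fin n → X →L[ℂ] ℂ) (η : E →L[ℂ] X) :
    (ofRows r).comp η = ofRows fun i => (r i).comp η := rfl

theorem ofRows_sub (r r' : Fin n → X →L[ℂ] ℂ) : ofRows r - ofRows r' = ofRows (r - r') := rfl

theorem norm_linfC_le {x : LinfC n} {C : ℝ} (hC : 0 ≤ C) (h : ∀ i, ‖x i‖ ≤ C) : ‖x‖ ≤ C := by
  rw [PiLp.norm_eq_ciSup]
  exact Real.iSup_le h hC

theorem norm_ofRows_le {r : Fin n → X →L[ℂ] ℂ} {C : ℝ} (hC : 0 ≤ C) (h : ∀ i, ‖r i‖ ≤ C) :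
    ‖ofRows r‖ ≤ C :=
  ContinuousLinearMap.opNorm_le_bound _ hC fun x =>
    norm_linfC_le (by positivity) fun i => (r i).le_of_opNorm_le (h i) x

end Rows

section Interlacing

variable {α ι : Type*} {E X : Type*} [NormedAddCommGroup E] [NormedSpace ℂ E]
  [NormedAddCommGroup X] [NormedSpace ℂ X]

variable [Fintype ι]

/-- A contractive section of one of the coordinate projections of `ι → X`. -/
def IsCoordSection (i : X →L[ℂ] ι → X) : Prop :=
  (∀ x, ‖i x‖ ≤ ‖x‖) ∧ ∃ k, ∀ x, i x k = x

/-- The functionals `D a` composed with the coordinate projections of `ι → X`, where the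
lexicographic order puts the copies of each `D a` next to each other. -/
noncomputable def interlace (D : α → X →L[ℂ] ℂ) (p : α ×ₗ ι) : (ι → X) →L[ℂ] ℂ :=
  (D (ofLex p).1).comp (ContinuousLinearMap.proj (ofLex p).2)

theorem norm_interlace_comp_le (D : α → X →L[ℂ] ℂ) (p : α ×ₗ ι) {i : E →L[ℂ] ι → X}
    (hi : ∀ x, ‖i x‖ ≤ ‖x‖) : ‖(interlace D p).comp i‖ ≤ ‖D (ofLex p).1‖ :=
  ContinuousLinearMap.opNorm_le_bound _ (norm_nonneg _) fun x =>
    (D (ofLex p).1).le_opNorm_of_le ((norm_le_pi_norm (i x) _).trans (hi x))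

theorem norm_interlace_le (D : α → X →L[ℂ] ℂ) (p : α ×ₗ ι) :
    ‖interlace D p‖ ≤ ‖D (ofLex p).1‖ :=
  norm_interlace_comp_le D p (i := ContinuousLinearMap.id ℂ (ι → X)) fun _ => le_rfl

theorem IsCoordSection.exists_rigidSurj [LinearOrder α] [Finite α] [LinearOrder ι]
    {D : α → X →L[ℂ] ℂ} {ε : ℝ} (hε : 0 ≤ ε)
    (hD : ∀ a v, ‖v‖ ≤ ‖D a‖ → ∃ b ≤ a, ‖v - D b‖ ≤ ε) {i : X →L[ℂ] ι → X}
    (hi : IsCoordSection i) :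
    ∃ τ : α ×ₗ ι → α, RigidSurj τ ∧ ∀ p, ‖(interlace D p).comp i - D (τ p)‖ ≤ ε := by
  obtain ⟨hi_le, k, hk⟩ := hi
  have exists_index : ∀ p : α ×ₗ ι, ∃ b ≤ (ofLex p).1,
      ‖(interlace D p).comp i - D b‖ ≤ ε ∧ ((ofLex p).2 = k → b = (ofLex p).1) := fun p => by
    by_cases hp : (ofLex p).2 = k
    · have comp_eq : (interlace D p).comp i = D (ofLex p).1 := by
        ext x
        exact congrArg (D (ofLex p).1) (hp ▸ hk x)
      exact ⟨_, le_rfl, by rwa [comp_eq, sub_self, norm_zero], fun _ => rfl⟩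
    · obtain ⟨b, hb, hbε⟩ := hD _ _ (norm_interlace_comp_le D p hi_le)
      exact ⟨b, hb, hbε, fun h => absurd h hp⟩
  choose τ hτ_le hτε hτk using exists_index
  have : Finite (α ×ₗ ι) := inferInstanceAs (Finite (α × ι))
  exact ⟨τ, rigidSurj_of_le_monotone Prod.Lex.monotone_fst_ofLex hτ_le
    fun a => ⟨toLex (a, k), rfl, hτk (toLex (a, k)) rfl⟩, hτε⟩

/-- A set of functionals that controls the norm: any bound on the absolute values of all of its
members at a vector bounds the norm of that vector. -/
def IsNorming (F : Set (X →L[ℂ] ℂ)) : Prop :=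
  ∀ x C, 0 ≤ C → (∀ f ∈ F, ‖f x‖ ≤ C) → ‖x‖ ≤ C

theorem IsNorming.norm_ofRows_interlace {D : α → X →L[ℂ] ℂ} (hD : IsNorming (Set.range D))
    (hD_le : ∀ a, ‖D a‖ ≤ 1) {n : ℕ} {σ : Fin n → α ×ₗ ι} (hσ : Function.Surjective σ)
    (y : ι → X) : ‖ofRows (interlace D ∘ σ) y‖ = ‖y‖ := by
  apply le_antisymm
  · have hle : ‖ofRows (interlace D ∘ σ)‖ ≤ 1 :=
      norm_ofRows_le zero_le_one fun i => (norm_interlace_le D (σ i)).trans (hD_le _)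
    simpa only [one_mul] using ContinuousLinearMap.le_of_opNorm_le _ hle y
  · refine (pi_norm_le_iff_of_nonneg (norm_nonneg _)).mpr fun k => hD _ _ (norm_nonneg _) ?_
    rintro _ ⟨a, rfl⟩
    obtain ⟨i, hi⟩ := hσ (toLex (a, k))
    have row_eq : ofRows (interlace D ∘ σ) y i = D a (y k) := by
      rw [ofRows_apply, Function.comp_apply, hi]
      rfl
    exact row_eq ▸ PiLp.norm_apply_le _ i

end Interlacing

section LipschitzColouring

theorem exists_lipschitz_extension {V : Type*} [PseudoMetricSpace V] {p : V → Prop} {K : NNReal}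
    {c : Subtype p → ℝ} (hc : LipschitzWith K c) :
    ∃ C : V → ℝ, LipschitzWith K C ∧ ∀ v : Subtype p, C v = c v := by
  have extend_eq : ∀ v : Subtype p, Function.extend Subtype.val c 0 v = c v :=
    Subtype.val_injective.extend_apply c 0
  have hext : LipschitzOnWith K (Function.extend Subtype.val c 0) {v | p v} :=
    fun v hv w hw => by
      rw [extend_eq ⟨v, hv⟩, extend_eq ⟨w, hw⟩]
      exact hc ⟨v, hv⟩ ⟨w, hw⟩
  obtain ⟨C, hC, hCc⟩ := hext.extend_real
  exact ⟨C, hC, fun v => (hCc v.2).symm.trans (extend_eq v)⟩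

variable {E X : Type*} [NormedAddCommGroup E] [NormedSpace ℂ E] [NormedAddCommGroup X]
  [NormedSpace ℂ X]

theorem abs_sub_le_norm_sub_of_lipschitzWith {V : Type*} [SeminormedAddCommGroup V] {c : V → ℝ}
    (hc : LipschitzWith 1 c) (x y : V) : |c x - c y| ≤ ‖x - y‖ := by
  simpa using hc.norm_sub_le x y

theorem norm_comp_le_norm_left {F : Type*} [NormedAddCommGroup F] [NormedSpace ℂ F]
    (g : X →L[ℂ] F) {f : E →L[ℂ] X} (hf : ‖f‖ ≤ 1) : ‖g.comp f‖ ≤ ‖g‖ :=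
  (g.opNorm_comp_le f).trans (mul_le_of_le_one_right (norm_nonneg g) hf)

theorem norm_comp_le_norm_right {F : Type*} [NormedAddCommGroup F] [NormedSpace ℂ F]
    {g : X →L[ℂ] F} (hg : ‖g‖ ≤ 1) (f : E →L[ℂ] X) : ‖g.comp f‖ ≤ ‖f‖ :=
  (g.opNorm_comp_le f).trans (mul_le_of_le_one_left (norm_nonneg f) hg)

theorem exists_mem_forall_abs_sub_lt {J : Type*} [Fintype J] {ε : ℝ} (hε : 0 < ε)
    {T : Set (J → ℝ)} (hT : Metric.closedBall 0 1 ⊆ ⋃ t ∈ T, Metric.ball t ε) {u : J → ℝ}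
    (hu : ∀ j, |u j| ≤ 1) : ∃ t ∈ T, ∀ j, |u j - t j| < ε := by
  have hu_ball : u ∈ Metric.closedBall (0 : J → ℝ) 1 :=
    mem_closedBall_zero_iff.mpr ((pi_norm_le_iff_of_nonneg zero_le_one).mpr hu)
  obtain ⟨t, ht, hut⟩ := Set.mem_iUnion₂.mp (hT hu_ball)
  exact ⟨t, ht, (dist_pi_lt_iff hε).mp hut⟩

theorem dual_ramsey_lipschitz {α β : Type*} [LinearOrder α] [Finite α] [Nonempty α]
    [LinearOrder β] [Finite β] [Nonempty β] {D : β → X →L[ℂ] ℂ} (hD : ∀ b, ‖D b‖ ≤ 1)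
    {K : Set (E →L[ℂ] X)} (hK : IsCompact K) (hK_ball : K ⊆ Metric.closedBall 0 1) {ε : ℝ}
    (hε : 0 < ε) :
    ∃ N : ℕ, ∀ c : (E →L[ℂ] LinfC N) → ℝ, LipschitzWith 1 c →
      ∃ σ : Fin N → α, RigidSurj σ ∧ ∀ τ τ' : α → β, RigidSurj τ → RigidSurj τ' → ∀ η ∈ K,
        |c ((ofRows (D ∘ τ ∘ σ)).comp η) - c ((ofRows (D ∘ τ' ∘ σ)).comp η)| ≤ ε := by
  have hε4 : 0 < ε / 4 := by positivity
  obtain ⟨J, hJK, hJ, hJ_cover⟩ := hK.finite_cover_balls hε4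
  have := hJ.fintype
  obtain ⟨T, -, hT, hT_cover⟩ := (isCompact_closedBall (0 : J → ℝ) 1).finite_cover_balls hε4
  have := hT.to_subtype
  obtain ⟨N, hN⟩ := dual_ramsey (α := α) (β := β) (κ := T)
  refine ⟨N, fun c hc => ?_⟩
  let value (w : Fin N → β) (η : E →L[ℂ] X) : ℝ := c ((ofRows (D ∘ w)).comp η)
  have norm_rows_le : ∀ w : Fin N → β, ‖ofRows (D ∘ w)‖ ≤ 1 :=
    fun w => norm_ofRows_le zero_le_one fun i => hD (w i)
  have value_lipschitz : ∀ w η η', |value w η - value w η'| ≤ ‖η - η'‖ := fun w η η' =>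
    (abs_sub_le_norm_sub_of_lipschitzWith hc _ _).trans <| by
      rw [← ContinuousLinearMap.comp_sub]
      exact norm_comp_le_norm_right (norm_rows_le w) _
  -- The colour of a word is a net point near the profile of `c` on the finite net `J`.
  have exists_colour : ∀ w : Fin N → β, ∃ t : T, ∀ η : J,
      |value w η - value w 0 - (t : J → ℝ) η| < ε / 4 := fun w => by
    obtain ⟨t, ht, htw⟩ := exists_mem_forall_abs_sub_lt hε4 hT_cover fun η : J =>
      (value_lipschitz w η 0).trans <| by
        rw [sub_zero]
        exact mem_closedBall_zero_iff.mp (hK_ball (hJK η.2))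
    exact ⟨⟨t, ht⟩, htw⟩
  choose colour hcolour using exists_colour
  obtain ⟨σ, hσ, k, hk⟩ := hN colour
  refine ⟨σ, hσ, fun τ τ' hτ hτ' η hη => ?_⟩
  obtain ⟨η₀, hη₀, hηη₀⟩ := Set.mem_iUnion₂.mp (hJ_cover hη)
  rw [mem_ball_iff_norm] at hηη₀
  have value_zero : value (τ ∘ σ) 0 = value (τ' ∘ σ) 0 := by
    simp only [value, ContinuousLinearMap.comp_zero]
  have approx : ∀ ρ, RigidSurj ρ →
      |value (ρ ∘ σ) η - value (ρ ∘ σ) 0 - (k : J → ℝ) ⟨η₀, hη₀⟩| ≤ ε / 2 := fun ρ hρ => by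
    have h := hk ρ hρ ▸ hcolour (ρ ∘ σ) ⟨η₀, hη₀⟩
    have hnear := value_lipschitz (ρ ∘ σ) η η₀
    rw [abs_lt] at h
    rw [abs_le] at hnear ⊢
    exact ⟨by linarith, by linarith⟩
  have h := abs_le.mp (approx τ hτ)
  have h' := abs_le.mp (approx τ' hτ')
  exact abs_le.mpr ⟨by linarith, by linarith⟩

theorem IsNorming.exists_isometry {ι : Type*} [LinearOrder ι] [Fintype ι] [Nonempty ι]
    [FiniteDimensional ℂ E] [FiniteDimensional ℂ X] {F : Set (X →L[ℂ] ℂ)} (hF : F.Finite)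
    (hF_norming : IsNorming F) (hF_ball : F ⊆ Metric.closedBall 0 1) {ε : ℝ} (hε : 0 < ε) :
    ∃ N : ℕ, ∀ c : (E →L[ℂ] LinfC N) → ℝ, LipschitzWith 1 c →
      ∃ Γ : (ι → X) →L[ℂ] LinfC N, (∀ y, ‖Γ y‖ = ‖y‖) ∧
        ∀ i i' : X →L[ℂ] ι → X, IsCoordSection i → IsCoordSection i' → ∀ η : E →L[ℂ] X, ‖η‖ ≤ 1 →
          |c ((Γ.comp i).comp η) - c ((Γ.comp i').comp η)| ≤ ε := by
  have hε3 : 0 < ε / 3 := by positivity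
  have : ProperSpace (X →L[ℂ] ℂ) := FiniteDimensional.proper ℂ _
  have : ProperSpace (E →L[ℂ] X) := FiniteDimensional.proper ℂ _
  obtain ⟨s, D, ⟨a₀, -⟩, hFD, hD_le, hD⟩ := exists_norm_sorted_net hε3 hF hF_ball
  have : Nonempty (Fin s) := ⟨a₀⟩
  have : Finite (Fin s ×ₗ ι) := inferInstanceAs (Finite (Fin s × ι))
  have : Nonempty (Fin s ×ₗ ι) := inferInstanceAs (Nonempty (Fin s × ι))
  obtain ⟨N, hN⟩ := dual_ramsey_lipschitz (α := Fin s ×ₗ ι) hD_le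
    (isCompact_closedBall (0 : E →L[ℂ] X) 1) subset_rfl hε3
  refine ⟨N, fun c hc => ?_⟩
  obtain ⟨σ, hσ, hcσ⟩ := hN c hc
  let Γ : (ι → X) →L[ℂ] LinfC N := ofRows (interlace D ∘ σ)
  have hD_norming : IsNorming (Set.range D) :=
    fun x C hC h => hF_norming x C hC fun f hf => h f (hFD hf)
  refine ⟨Γ, hD_norming.norm_ofRows_interlace hD_le hσ.surjective,
    fun i i' hi hi' η hη => ?_⟩
  have exists_approx : ∀ j : X →L[ℂ] ι → X, IsCoordSection j → ∃ τ : Fin s ×ₗ ι → Fin s,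
      RigidSurj τ ∧ |c ((Γ.comp j).comp η) - c ((ofRows (D ∘ τ ∘ σ)).comp η)| ≤ ε / 3 :=
    fun j hj => by
      obtain ⟨τ, hτ, hτε⟩ := hj.exists_rigidSurj hε3.le hD
      refine ⟨τ, hτ, (abs_sub_le_norm_sub_of_lipschitzWith hc _ _).trans ?_⟩
      rw [← ContinuousLinearMap.sub_comp, ofRows_comp, ofRows_sub]
      exact (norm_comp_le_norm_left _ hη).trans (norm_ofRows_le hε3.le fun r => hτε (σ r))
  obtain ⟨τ, hτ, hiτ⟩ := exists_approx i hi
  obtain ⟨τ', hτ', hiτ'⟩ := exists_approx i' hi'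
  have hττ' := abs_le.mp (hcσ τ τ' hτ hτ' η (mem_closedBall_zero_iff.mpr hη))
  rw [abs_le] at hiτ hiτ' ⊢
  exact ⟨by linarith, by linarith⟩

end LipschitzColouring

section Amalgamation

theorem exists_factor_of_norm_le {𝕜 E Y : Type*} [RCLike 𝕜] [NormedAddCommGroup E]
    [NormedSpace 𝕜 E] [NormedAddCommGroup Y] [NormedSpace 𝕜 Y] (φ : E →L[𝕜] Y) (f : E →L[𝕜] 𝕜)
    (h : ∀ x, ‖f x‖ ≤ ‖φ x‖) : ∃ g : Y →L[𝕜] 𝕜, ‖g‖ ≤ 1 ∧ g.comp φ = f := by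
  obtain ⟨r, hr⟩ := φ.toLinearMap.rangeRestrict.exists_rightInverse_of_surjective
    φ.toLinearMap.range_rangeRestrict
  have φ_r : ∀ y, φ (r y) = y := fun y => congrArg Subtype.val (LinearMap.congr_fun hr y)
  let g₀ : StrongDual 𝕜 φ.toLinearMap.range := (f.toLinearMap ∘ₗ r).mkContinuous 1 fun y => by
    rw [one_mul]
    exact (h (r y)).trans_eq (by rw [φ_r]; rfl)
  obtain ⟨g, hg, hg_norm⟩ := exists_extension_norm_eq _ g₀
  refine ⟨g, hg_norm.trans_le (LinearMap.mkContinuous_norm_le _ zero_le_one _), ?_⟩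
  ext x
  have φ_sub : φ (r ⟨φ x, x, rfl⟩ - x) = 0 := by rw [map_sub, φ_r, sub_self]
  have f_sub : f (r ⟨φ x, x, rfl⟩ - x) = 0 := norm_le_zero_iff.mp <| by
    simpa only [φ_sub, norm_zero] using h (r ⟨φ x, x, rfl⟩ - x)
  calc g (φ x) = f (r ⟨φ x, x, rfl⟩) := hg ⟨φ x, x, rfl⟩
    _ = f x := by rwa [map_sub, sub_eq_zero] at f_sub

variable {E : Type*} [NormedAddCommGroup E] [NormedSpace ℂ E] {m : ℕ}

theorem exists_factor_linfC_of_norm_le {Y : Type*} [NormedAddCommGroup Y] [NormedSpace ℂ Y]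
    (φ : E →L[ℂ] Y) (ψ : E →L[ℂ] LinfC m) (h : ∀ x, ‖ψ x‖ ≤ ‖φ x‖) :
    ∃ A : Y →L[ℂ] LinfC m, ‖A‖ ≤ 1 ∧ A.comp φ = ψ := by
  choose g hg hgφ using fun k : Fin m => exists_factor_of_norm_le φ
    ((PiLp.proj ⊤ (fun _ : Fin m => ℂ) k).comp ψ) fun x => (PiLp.norm_apply_le _ k).trans (h x)
  refine ⟨ofRows g, norm_ofRows_le zero_le_one hg, ?_⟩
  rw [ofRows_comp, funext hgφ]
  rfl

theorem isNorming_range_proj :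
    IsNorming (Set.range fun k => PiLp.proj (𝕜 := ℂ) ⊤ (fun _ : Fin m => ℂ) k) :=
  fun _ _ hC h => norm_linfC_le hC fun k => h _ ⟨k, rfl⟩

theorem range_proj_subset_closedBall :
    (Set.range fun k => PiLp.proj (𝕜 := ℂ) ⊤ (fun _ : Fin m => ℂ) k) ⊆ Metric.closedBall 0 1 := by
  rintro _ ⟨k, rfl⟩
  refine mem_closedBall_zero_iff.mpr (ContinuousLinearMap.opNorm_le_bound _ zero_le_one fun x => ?_)
  rw [one_mul]
  exact PiLp.norm_apply_le x k

theorem isCoordSection_pi {ι X : Type*} [Fintype ι] [NormedAddCommGroup X] [NormedSpace ℂ X]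
    {A : ι → X →L[ℂ] X} (hA : ∀ k, ‖A k‖ ≤ 1) {k : ι}
    (hk : A k = ContinuousLinearMap.id ℂ X) : IsCoordSection (ContinuousLinearMap.pi A) :=
  ⟨fun x => (pi_norm_le_iff_of_nonneg (norm_nonneg x)).mpr fun l =>
    ((A l).le_of_opNorm_le (hA l) x).trans_eq (one_mul _), k, fun x => by
    rw [ContinuousLinearMap.pi_apply, hk, ContinuousLinearMap.id_apply]⟩

theorem norm_inv_smul_le_of_isDeltaEmbedding {X Y Y' : Type*} [NormedAddCommGroup X]
    [NormedSpace ℂ X] [NormedAddCommGroup Y] [NormedSpace ℂ Y] [NormedAddCommGroup Y']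
    [NormedSpace ℂ Y'] {δ : ℝ} (hδ : 0 ≤ δ) {φ : X →L[ℂ] Y} {ψ : X →L[ℂ] Y'}
    (hφ : IsDeltaEmbedding δ φ) (hψ : IsDeltaEmbedding δ ψ) (x : X) :
    ‖(((1 + δ)⁻¹ : ℝ) • ψ) x‖ ≤ ‖φ x‖ := by
  have hδ1 : 0 < 1 + δ := by positivity
  rw [smul_apply, norm_smul, Real.norm_of_nonneg (by positivity), inv_mul_le_iff₀ hδ1]
  exact (hψ x).1.trans (hφ x).2

theorem norm_sub_inv_smul_le {V : Type*} [SeminormedAddCommGroup V] [NormedSpace ℝ V] {δ : ℝ}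
    (hδ : 0 ≤ δ) {v : V} (hv : ‖v‖ ≤ 1) : ‖v - (1 + δ)⁻¹ • v‖ ≤ δ := by
  have hδ1 : 1 + δ ≠ 0 := by positivity
  have hcoef : 1 - (1 + δ)⁻¹ = δ / (1 + δ) := by
    rw [eq_div_iff hδ1, sub_mul, inv_mul_cancel₀ hδ1, one_mul, add_sub_cancel_left]
  calc ‖v - (1 + δ)⁻¹ • v‖ = δ / (1 + δ) * ‖v‖ := by
        rw [← Real.norm_of_nonneg (by positivity : 0 ≤ δ / (1 + δ)), ← norm_smul, ← hcoef,
          sub_smul, one_smul]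
    _ ≤ δ / (1 + δ) := mul_le_of_le_one_right (by positivity) hv
    _ ≤ δ := div_le_self hδ (by linarith)

theorem norm_le_one_of_isDeltaEmbedding {X Y : Type*} [NormedAddCommGroup X] [NormedSpace ℂ X]
    [NormedAddCommGroup Y] [NormedSpace ℂ Y] {δ : ℝ} {φ : X →L[ℂ] Y}
    (hφ : IsDeltaEmbedding δ φ) : ‖φ‖ ≤ 1 :=
  φ.opNorm_le_bound zero_le_one fun x => (hφ x).1.trans_eq (one_mul _).symm

theorem exists_amalgamation {δ : ℝ} (hδ : 0 ≤ δ) {η₀ η₁ : E →L[ℂ] LinfC m}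
    (h₀ : IsDeltaEmbedding δ η₀) (h₁ : IsDeltaEmbedding δ η₁) :
    ∃ i j : LinfC m →L[ℂ] Fin 2 → LinfC m, IsCoordSection i ∧ IsCoordSection j ∧
      ‖i.comp η₀ - j.comp η₁‖ ≤ δ := by
  obtain ⟨A, hA, hAη⟩ := exists_factor_linfC_of_norm_le η₀ _
    (norm_inv_smul_le_of_isDeltaEmbedding hδ h₀ h₁)
  obtain ⟨B, hB, hBη⟩ := exists_factor_linfC_of_norm_le η₁ _
    (norm_inv_smul_le_of_isDeltaEmbedding hδ h₁ h₀)
  have hid : ‖ContinuousLinearMap.id ℂ (LinfC m)‖ ≤ 1 := ContinuousLinearMap.norm_id_le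
  refine ⟨ContinuousLinearMap.pi ![ContinuousLinearMap.id ℂ _, A],
    ContinuousLinearMap.pi ![B, ContinuousLinearMap.id ℂ _],
    isCoordSection_pi (Fin.forall_fin_two.mpr ⟨hid, hA⟩) (k := 0) rfl,
    isCoordSection_pi (Fin.forall_fin_two.mpr ⟨hB, hid⟩) (k := 1) rfl, ?_⟩
  have gap₀ : ‖η₀ - B.comp η₁‖ ≤ δ :=
    hBη ▸ norm_sub_inv_smul_le hδ (norm_le_one_of_isDeltaEmbedding h₀)
  have gap₁ : ‖A.comp η₀ - η₁‖ ≤ δ := by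
    rw [hAη, norm_sub_rev]
    exact norm_sub_inv_smul_le hδ (norm_le_one_of_isDeltaEmbedding h₁)
  exact ContinuousLinearMap.opNorm_le_bound _ hδ fun x =>
    (pi_norm_le_iff_of_nonneg (by positivity)).mpr <| Fin.forall_fin_two.mpr
      ⟨(η₀ - B.comp η₁).le_of_opNorm_le gap₀ x, (A.comp η₀ - η₁).le_of_opNorm_le gap₁ x⟩

end Amalgamation

end StableRamsey

open StableRamsey in
theorem srp_linf_complex_general (E : Type*) [NormedAddCommGroup E] [NormedSpace ℂ E]
    [FiniteDimensional ℂ E] (m : ℕ) (δ : ℝ) (hδ : 0 ≤ δ) (ε : ℝ) (hε : 0 < ε) :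
    ∃ n : ℕ,
      ∀ c : {φ : E →L[ℂ] LinfC n // IsDeltaEmbedding δ φ} → ℝ, LipschitzWith 1 c →
        ∃ (γ : LinfC m →L[ℂ] LinfC n) (_ : ∀ y, ‖γ y‖ = ‖y‖),
          ∀ (η₀ η₁ : E →L[ℂ] LinfC m), IsDeltaEmbedding δ η₀ → IsDeltaEmbedding δ η₁ →
            ∀ (h₀ : IsDeltaEmbedding δ (γ.comp η₀)) (h₁ : IsDeltaEmbedding δ (γ.comp η₁)),
              |c ⟨γ.comp η₀, h₀⟩ - c ⟨γ.comp η₁, h₁⟩| ≤ ε + δ := by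
  obtain ⟨n, hn⟩ := isNorming_range_proj.exists_isometry (E := E) (X := LinfC m) (ι := Fin 2)
    (Set.finite_range _) range_proj_subset_closedBall (half_pos hε)
  refine ⟨n, fun c hc => ?_⟩
  obtain ⟨C, hC, hCc⟩ := exists_lipschitz_extension hc
  obtain ⟨Γ, hΓ, hCΓ⟩ := hn C hC
  let diag : LinfC m →L[ℂ] Fin 2 → LinfC m := .pi fun _ => .id ℂ _
  have hdiag : IsCoordSection diag := ⟨fun x => (pi_norm_const x).le, 0, fun _ => rfl⟩
  refine ⟨Γ.comp diag, fun y => (hΓ _).trans (pi_norm_const y), fun η₀ η₁ hη₀ hη₁ h₀ h₁ => ?_⟩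
  obtain ⟨i, j, hi, hj, hij⟩ := exists_amalgamation hδ hη₀ hη₁
  have near_i := hCΓ diag i hdiag hi η₀ (norm_le_one_of_isDeltaEmbedding hη₀)
  have near_j := hCΓ diag j hdiag hj η₁ (norm_le_one_of_isDeltaEmbedding hη₁)
  have gap : |C ((Γ.comp i).comp η₀) - C ((Γ.comp j).comp η₁)| ≤ δ := by
    refine (abs_sub_le_norm_sub_of_lipschitzWith hC _ _).trans (le_trans ?_ hij)
    exact ContinuousLinearMap.opNorm_le_bound _ (norm_nonneg _) fun x => by
      simpa [← map_sub, hΓ] using (i.comp η₀ - j.comp η₁).le_opNorm x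
  rw [← hCc, ← hCc]
  rw [abs_le] at near_i near_j gap ⊢
  exact ⟨by linarith, by linarith⟩

/-- Stable Ramsey property, with stability modulus `ϖ(δ) = δ`, of the class `{ℓ∞ⁿ(ℂ)}ₙ`. -/
theorem srp_linf_complex (d m : ℕ) (δ : ℝ) (hδ : 0 ≤ δ) (ε : ℝ) (hε : 0 < ε) :
    ∃ n : ℕ,
      ∀ c : {φ : LinfC d →L[ℂ] LinfC n // IsDeltaEmbedding δ φ} → ℝ,
        LipschitzWith 1 c → (∀ φ, c φ ∈ Set.Icc (0 : ℝ) 1) →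
        ∃ (γ : LinfC m →L[ℂ] LinfC n) (_ : ∀ y, ‖γ y‖ = ‖y‖),
          ∀ (η₀ η₁ : LinfC d →L[ℂ] LinfC m),
            IsDeltaEmbedding δ η₀ → IsDeltaEmbedding δ η₁ →
            ∀ (h₀ : IsDeltaEmbedding δ (γ.comp η₀)) (h₁ : IsDeltaEmbedding δ (γ.comp η₁)),
              |c ⟨γ.comp η₀, h₀⟩ - c ⟨γ.comp η₁, h₁⟩| ≤ ε + δ :=
  let ⟨n, hn⟩ := srp_linf_complex_general (LinfC d) m δ hδ ε hε
  ⟨n, fun c hc _ => hn c hc⟩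
end

section
/- Stable amalgamation property for the class {ℓ∞^n(ℂ)}_{n∈ℕ} with modulus ϖ(δ) = δ: for all k, m, l ∈ ℕ, every δ ≥ 0 and ε > 0, and all linear δ-embeddings φ : ℓ∞^k(ℂ) → ℓ∞^m(ℂ) and ψ : ℓ∞^k(ℂ) → ℓ∞^l(ℂ), there exist N ∈ ℕ and linear isometric embeddings i : ℓ∞^m(ℂ) → ℓ∞^N(ℂ) and j : ℓ∞^l(ℂ) → ℓ∞^N(ℂ) such that ‖i ∘ φ − j ∘ ψ‖ ≤ δ + ε (operator norm). -/
/-!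
By Hahn–Banach, coordinate by coordinate, a linear map `T` into `ℓ∞` with `‖T x‖ ≤ (1 + δ) ‖ψ x‖`
factors through `ψ` with a factor of norm at most `1 + δ`. Dividing the factor by `1 + δ` makes it a
contraction and, when `T` is a contraction, costs an error of at most `δ / (1 + δ)`. So `φ ≈ R ∘ ψ`
and `ψ ≈ S ∘ φ` with contractions `R` and `S`, and the graphs `y ↦ (y, S y)` and `z ↦ (R z, z)` are
isometric embeddings into the `ℓ∞`-sum of the two spaces, which is again an `ℓ∞` space.
-/

variable {𝕜 X Y Z ι κ ν : Type*} [RCLike 𝕜]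

section Factorization

variable [SeminormedAddCommGroup Y] [NormedSpace 𝕜 Y] [Fintype ι] {C δ : ℝ}

theorem exists_strongDual_comp_eq_of_norm_le [AddCommGroup X] [Module 𝕜 X] (hC : 0 ≤ C)
    (f : X →ₗ[𝕜] 𝕜) (ψ : X →ₗ[𝕜] Y) (hf : ∀ x, ‖f x‖ ≤ C * ‖ψ x‖) :
    ∃ g : StrongDual 𝕜 Y, ‖g‖ ≤ C ∧ ∀ x, g (ψ x) = f x := by
  have hrange (x : X) : f.compLeftInverse ψ ⟨ψ x, x, rfl⟩ = f x :=
    LinearMap.compLeftInverse_apply_of_bdd _ _ ⟨C, hf⟩ x _ rfl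
  obtain ⟨g, hg, hnorm⟩ := exists_extension_norm_eq _ (f.compLeftInverse ψ)
  refine ⟨g, hnorm.trans_le (ContinuousLinearMap.opNorm_le_bound _ hC ?_), fun x => ?_⟩
  · rintro ⟨_, x, rfl⟩
    exact (congrArg norm (hrange x)).trans_le (hf x)
  · exact (hg ⟨ψ x, x, rfl⟩).trans (hrange x)

theorem exists_piLp_top_comp_eq_of_norm_le [AddCommGroup X] [Module 𝕜 X] (hC : 0 ≤ C)
    (T : X →ₗ[𝕜] PiLp ⊤ fun _ : ι => 𝕜) (ψ : X →ₗ[𝕜] Y) (hT : ∀ x, ‖T x‖ ≤ C * ‖ψ x‖) :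
    ∃ S : Y →L[𝕜] PiLp ⊤ fun _ : ι => 𝕜, ‖S‖ ≤ C ∧ ∀ x, S (ψ x) = T x := by
  choose g hg hgψ using fun a : ι =>
    exists_strongDual_comp_eq_of_norm_le hC (PiLp.projₗ ⊤ (fun _ : ι => 𝕜) a ∘ₗ T) ψ
      fun x => (PiLp.norm_apply_le (T x) a).trans (hT x)
  let toPiLp := (PiLp.continuousLinearEquiv ⊤ 𝕜 fun _ : ι => 𝕜).symm.toContinuousLinearMap
  refine ⟨toPiLp ∘L .pi g, ContinuousLinearMap.opNorm_le_bound _ hC fun y => ?_, fun x => ?_⟩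
  · rw [PiLp.norm_eq_ciSup]
    exact Real.iSup_le (fun a => (g a).le_of_opNorm_le (hg a) y) (by positivity)
  · ext a
    exact hgψ a x

theorem exists_contraction_norm_sub_comp_le [SeminormedAddCommGroup X] [NormedSpace 𝕜 X]
    (hδ : 0 ≤ δ) (T : X →ₗ[𝕜] PiLp ⊤ fun _ : ι => 𝕜) (hT : ∀ x, ‖T x‖ ≤ ‖x‖)
    (ψ : X →ₗ[𝕜] Y) (hψ : ∀ x, ‖x‖ ≤ (1 + δ) * ‖ψ x‖) :
    ∃ S : Y →L[𝕜] PiLp ⊤ fun _ : ι => 𝕜,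
      ‖S‖ ≤ 1 ∧ ∀ x, ‖T x - S (ψ x)‖ ≤ δ / (1 + δ) * ‖x‖ := by
  have hpos : 0 < 1 + δ := by linarith
  obtain ⟨S, hS, hSψ⟩ :=
    exists_piLp_top_comp_eq_of_norm_le hpos.le T ψ fun x => (hT x).trans (hψ x)
  let c : 𝕜 := ((1 + δ)⁻¹ : ℝ)
  have hc : ‖c‖ = (1 + δ)⁻¹ := RCLike.norm_of_nonneg (by positivity)
  have hc_compl : ‖1 - c‖ = δ / (1 + δ) := by
    have : 1 - c = (δ / (1 + δ) : ℝ) := by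
      rw [← RCLike.ofReal_one, ← RCLike.ofReal_sub]
      congr 1
      field_simp
      ring
    rw [this, RCLike.norm_of_nonneg (by positivity)]
  refine ⟨c • S, ?_, fun x => ?_⟩
  · rw [norm_smul, hc, inv_mul_le_iff₀ hpos, mul_one]
    exact hS
  · calc ‖T x - (c • S) (ψ x)‖ = ‖(1 - c) • T x‖ := by
          rw [smul_apply, hSψ, sub_smul, one_smul]
      _ = δ / (1 + δ) * ‖T x‖ := by rw [norm_smul, hc_compl]
      _ ≤ δ / (1 + δ) * ‖x‖ := by gcongr; exact hT x

end Factorization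

section Amalgamation

variable [SeminormedAddCommGroup Y] [NormedSpace 𝕜 Y] [SeminormedAddCommGroup Z] [NormedSpace 𝕜 Z]

/-- The graph `y ↦ (y, S y)` of a contraction `S`, as a linear isometry into the product with its
supremum norm. -/
def contractionGraph (S : Y →L[𝕜] Z) (hS : ‖S‖ ≤ 1) : Y →ₗᵢ[𝕜] Y × Z where
  toLinearMap := LinearMap.id.prod S
  norm_map' y := max_eq_left ((S.le_of_opNorm_le hS y).trans_eq (one_mul ‖y‖))

theorem norm_contractionGraph_sub_swap_contractionGraph_le {η : ℝ}
    {S : Y →L[𝕜] Z} (hS : ‖S‖ ≤ 1) {R : Z →L[𝕜] Y} (hR : ‖R‖ ≤ 1) {y : Y} {z : Z}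
    (hy : ‖y - R z‖ ≤ η) (hz : ‖z - S y‖ ≤ η) :
    ‖contractionGraph S hS y - (contractionGraph R hR z).swap‖ ≤ η :=
  max_le hy ((norm_sub_rev (S y) z).trans_le hz)

end Amalgamation

/-- The `ℓ∞`-sum of `ℓ∞(ι)` and `ℓ∞(κ)` is `ℓ∞(ν)`, where `e` identifies `ν` with the disjoint union
of `ι` and `κ`. -/
noncomputable def prodPiLpTopEquiv [Fintype ι] [Fintype κ] [Fintype ν] (e : ι ⊕ κ ≃ ν) :
    ((PiLp ⊤ fun _ : ι => 𝕜) × (PiLp ⊤ fun _ : κ => 𝕜)) ≃ₗᵢ[𝕜] PiLp ⊤ fun _ : ν => 𝕜 :=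
  WithLp.prodEquivₗᵢ.symm.trans <|
    (PiLp.sumPiLpEquivProdLpPiLp ⊤ fun _ : ι ⊕ κ => 𝕜).symm.trans <|
      LinearIsometryEquiv.piLpCongrLeft ⊤ 𝕜 𝕜 e

theorem sap_linf_complex_general [SeminormedAddCommGroup X] [NormedSpace 𝕜 X]
    [Fintype ι] [Fintype κ] [Fintype ν] (e : ι ⊕ κ ≃ ν) {δ : ℝ} (hδ : 0 ≤ δ)
    (φ : X →L[𝕜] PiLp ⊤ fun _ : ι => 𝕜) (hφ : ∀ x, ‖φ x‖ ≤ ‖x‖ ∧ ‖x‖ ≤ (1 + δ) * ‖φ x‖)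
    (ψ : X →L[𝕜] PiLp ⊤ fun _ : κ => 𝕜) (hψ : ∀ x, ‖ψ x‖ ≤ ‖x‖ ∧ ‖x‖ ≤ (1 + δ) * ‖ψ x‖) :
    ∃ (i : (PiLp ⊤ fun _ : ι => 𝕜) →ₗᵢ[𝕜] PiLp ⊤ fun _ : ν => 𝕜)
      (j : (PiLp ⊤ fun _ : κ => 𝕜) →ₗᵢ[𝕜] PiLp ⊤ fun _ : ν => 𝕜),
      ‖i.toContinuousLinearMap ∘L φ - j.toContinuousLinearMap ∘L ψ‖ ≤ δ / (1 + δ) := by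
  obtain ⟨R, hR, hφR⟩ :=
    exists_contraction_norm_sub_comp_le hδ φ.toLinearMap (fun x => (hφ x).1)
      ψ.toLinearMap (fun x => (hψ x).2)
  obtain ⟨S, hS, hψS⟩ :=
    exists_contraction_norm_sub_comp_le hδ ψ.toLinearMap (fun x => (hψ x).1)
      φ.toLinearMap (fun x => (hφ x).2)
  let i := contractionGraph S hS
  let j := (LinearIsometryEquiv.prodComm 𝕜 _ _).toLinearIsometry.comp (contractionGraph R hR)
  let toPiLp := (prodPiLpTopEquiv (𝕜 := 𝕜) e).toLinearIsometry
  refine ⟨toPiLp.comp i, toPiLp.comp j,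
    ContinuousLinearMap.opNorm_le_bound _ (by positivity) fun x => ?_⟩
  calc ‖toPiLp (i (φ x)) - toPiLp (j (ψ x))‖ = ‖i (φ x) - j (ψ x)‖ := by
        rw [← map_sub, toPiLp.norm_map]
    _ ≤ δ / (1 + δ) * ‖x‖ :=
        norm_contractionGraph_sub_swap_contractionGraph_le hS hR (hφR x) (hψS x)

/-- Stable amalgamation property, with stability modulus `ϖ(δ) = δ`, of the class
`{ℓ∞ⁿ(ℂ)}ₙ`. -/
theorem sap_linf_complex (k m l : ℕ) (δ : ℝ) (hδ : 0 ≤ δ) (ε : ℝ) (hε : 0 < ε)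
    (φ : LinfC k →L[ℂ] LinfC m) (hφ : IsDeltaEmbedding δ φ)
    (ψ : LinfC k →L[ℂ] LinfC l) (hψ : IsDeltaEmbedding δ ψ) :
    ∃ (N : ℕ) (i : LinfC m →L[ℂ] LinfC N) (j : LinfC l →L[ℂ] LinfC N),
      (∀ x, ‖i x‖ = ‖x‖) ∧ (∀ x, ‖j x‖ = ‖x‖) ∧ ‖i.comp φ - j.comp ψ‖ ≤ δ + ε := by
  obtain ⟨i, j, hij⟩ := sap_linf_complex_general finSumFinEquiv hδ φ hφ ψ hψ
  have hmod : δ / (1 + δ) ≤ δ := div_le_self hδ (by linarith)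
  exact ⟨m + l, i.toContinuousLinearMap, j.toContinuousLinearMap, i.norm_map, j.norm_map,
    hij.trans (by linarith)⟩
end
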